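/- Let A, B, C be real symmetric traceless n×n matrices. Then (‖A‖² + ‖B‖² + ‖C‖²)² ≥ 2‖[A,B]‖² + 2‖[B,C]‖² + 2‖[C,A]‖². -/

import Mathlib

/-!
The bound is the case of three matrices of the DDVV inequality
`∑ r, ∑ s, ‖[A r, A s]‖² ≤ (∑ r, ‖A r‖²)²` for symmetric matrices. Both of its sides are invariant
under rotating the family by an orthogonal matrix, and diagonalising its Gram matrix makes the
family pairwise orthogonal for the trace inner product.

Let `A` be symmetric and let `B s`, `s ∈ T`, be symmetric, pairwise orthogonal and of norm at most
one. Diagonalising `A` turns `∑ s, ‖[A, B s]‖²` into `∑ i, ∑ j, w i j * (d i - d j)²` with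
`w i j = ∑ s, (B s i j)²`; here `∑ i, ∑ j, w i j ≤ #T`, and `w i j ≤ 1 / 2` off the diagonal by
Bessel's inequality. Since `d i - d j` is the inner product of `d` with `e i - e j`, and two such
vectors have inner product at most one in absolute value unless they agree up to sign, Selberg's
inequality bounds the sum by `(#T + 1) * ‖A‖²`.

Hence in a normalised orthogonal family the numbers `u r s = ‖[A r, A s]‖²` have row sums at most
`#T` over every `T` containing `r`, and this forces `∑ r, ∑ s, x r * x s * u r s ≤ (∑ r, x r)²` for
all `x ≥ 0`.
-/

open Matrix BigOperators

/-- Frobenius norm squared of a real `n × n` matrix: the sum of the squares of all entries. -/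
noncomputable def frobSq {n : ℕ} (A : Matrix (Fin n) (Fin n) ℝ) : ℝ :=
  ∑ i, ∑ j, (A i j) ^ 2

/-- The commutator `[A, B] = A * B - B * A`. -/
def mcomm {n : ℕ} (A B : Matrix (Fin n) (Fin n) ℝ) : Matrix (Fin n) (Fin n) ℝ :=
  A * B - B * A

section DDVV

open scoped InnerProductSpace Matrix.Norms.Frobenius

variable {ι κ m n E F : Type*}

section WeightedSums

theorem sum_sum_weight_mul_le_of_row_sum_le (T : Finset κ) {w : κ → ℝ}
    (hw : ∀ e ∈ T, 0 ≤ w e) {K : κ → κ → ℝ} (hK : ∀ e f, K f e = K e f) {M : ℝ}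
    (hM : ∀ e ∈ T, ∑ f ∈ T, w f * |K e f| ≤ M) (z : κ → ℝ) :
    ∑ e ∈ T, ∑ f ∈ T, w e * w f * (z e * z f * K e f) ≤ M * ∑ e ∈ T, w e * z e ^ 2 := by
  have amgm (e f : κ) : z e * z f * K e f ≤ |K e f| * (z e ^ 2 + z f ^ 2) / 2 := by
    have habs := le_abs_self (z e * z f * K e f)
    have hsq := mul_nonneg (abs_nonneg (K e f)) (sq_nonneg (|z e| - |z f|))
    rw [abs_mul, abs_mul] at habs
    rw [sub_sq, sq_abs, sq_abs] at hsq
    linarith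
  have hswap : ∑ e ∈ T, ∑ f ∈ T, w e * w f * |K e f| * z f ^ 2 =
      ∑ e ∈ T, ∑ f ∈ T, w e * w f * |K e f| * z e ^ 2 := by
    rw [Finset.sum_comm]
    simp only [hK, mul_comm (w _) (w _)]
  calc ∑ e ∈ T, ∑ f ∈ T, w e * w f * (z e * z f * K e f)
    _ ≤ ∑ e ∈ T, ∑ f ∈ T, w e * w f * (|K e f| * (z e ^ 2 + z f ^ 2) / 2) := by
        gcongr with e he f hf
        · exact mul_nonneg (hw e he) (hw f hf)
        · exact amgm e f
    _ = (∑ e ∈ T, ∑ f ∈ T, w e * w f * |K e f| * z e ^ 2 +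
          ∑ e ∈ T, ∑ f ∈ T, w e * w f * |K e f| * z f ^ 2) / 2 := by
        simp only [← Finset.sum_add_distrib, Finset.sum_div]
        congr! 2
        ring
    _ = ∑ e ∈ T, w e * z e ^ 2 * ∑ f ∈ T, w f * |K e f| := by
        rw [hswap, add_self_div_two]
        simp only [Finset.mul_sum]
        congr! 2
        ring
    _ ≤ ∑ e ∈ T, w e * z e ^ 2 * M := by
        gcongr with e he
        · exact mul_nonneg (hw e he) (sq_nonneg _)
        · exact hM e he
    _ = M * ∑ e ∈ T, w e * z e ^ 2 := by rw [← Finset.sum_mul, mul_comm]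

theorem sum_sum_add_mul_add_mul {u : ι → ι → ℝ} (hu : ∀ r s, u s r = u r s) (T : Finset ι)
    (y : ι → ℝ) (μ : ℝ) :
    ∑ r ∈ T, ∑ s ∈ T, (y r + μ) * (y s + μ) * u r s =
      ∑ r ∈ T, ∑ s ∈ T, y r * y s * u r s + ∑ r ∈ T, (2 * μ * y r + μ ^ 2) * ∑ s ∈ T, u r s := by
  have hswap : ∑ r ∈ T, ∑ s ∈ T, y s * u r s = ∑ r ∈ T, ∑ s ∈ T, y r * u r s := by
    rw [Finset.sum_comm]
    simp only [hu]
  calc ∑ r ∈ T, ∑ s ∈ T, (y r + μ) * (y s + μ) * u r s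
    _ = ∑ r ∈ T, ∑ s ∈ T, y r * y s * u r s + μ * ∑ r ∈ T, ∑ s ∈ T, y r * u r s +
          μ * ∑ r ∈ T, ∑ s ∈ T, y s * u r s + ∑ r ∈ T, ∑ s ∈ T, μ ^ 2 * u r s := by
        simp only [Finset.mul_sum, ← Finset.sum_add_distrib]
        congr! 2
        ring
    _ = ∑ r ∈ T, ∑ s ∈ T, y r * y s * u r s +
          ∑ r ∈ T, (2 * μ * y r + μ ^ 2) * ∑ s ∈ T, u r s := by
        rw [hswap]
        simp only [Finset.mul_sum, ← Finset.sum_add_distrib]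
        congr! 2
        ring

-- Induction on `T`: subtracting `min x` from every entry creates a zero entry, and the row sum
-- bounds show that the right-hand side drops by at least as much as the left-hand side.
theorem sum_sum_mul_mul_le_sq_sum {u : ι → ι → ℝ} (hu : ∀ r s, u s r = u r s)
    (hrow : ∀ T : Finset ι, ∀ r ∈ T, ∑ s ∈ T, u r s ≤ T.card) (T : Finset ι) {x : ι → ℝ}
    (hx : ∀ r ∈ T, 0 ≤ x r) :
    ∑ r ∈ T, ∑ s ∈ T, x r * x s * u r s ≤ (∑ r ∈ T, x r) ^ 2 := by
  classical
  induction T using Finset.strongInduction generalizing x with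
  | H T ih =>
  rcases T.eq_empty_or_nonempty with rfl | hT
  · simp
  obtain ⟨r₀, hr₀, hmin⟩ := T.exists_min_image x hT
  obtain ⟨μ, hμ⟩ : ∃ μ, μ = x r₀ := ⟨_, rfl⟩
  obtain ⟨y, rfl⟩ : ∃ y : ι → ℝ, x = fun r ↦ y r + μ := ⟨fun r ↦ x r - μ, by simp⟩
  have hμ₀ : 0 ≤ μ := hμ ▸ hx r₀ hr₀
  have hy₀ : y r₀ = 0 := right_eq_add.mp hμ
  have hyT : ∀ r ∈ T, 0 ≤ y r := fun r hr ↦ by simpa [hy₀] using hmin r hr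
  have ih_y : ∑ r ∈ T, ∑ s ∈ T, y r * y s * u r s ≤ (∑ r ∈ T, y r) ^ 2 := by
    have := ih (T.erase r₀) (T.erase_ssubset hr₀) fun r hr ↦ hyT r (Finset.mem_of_mem_erase hr)
    simpa [← Finset.add_sum_erase T _ hr₀, hy₀] using this
  calc ∑ r ∈ T, ∑ s ∈ T, (y r + μ) * (y s + μ) * u r s
    _ = ∑ r ∈ T, ∑ s ∈ T, y r * y s * u r s +
          ∑ r ∈ T, (2 * μ * y r + μ ^ 2) * ∑ s ∈ T, u r s := sum_sum_add_mul_add_mul hu T y μ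
    _ ≤ (∑ r ∈ T, y r) ^ 2 + ∑ r ∈ T, (2 * μ * y r + μ ^ 2) * T.card := by
        gcongr with r hr
        · have hμy : 0 ≤ μ * y r := mul_nonneg hμ₀ (hyT r hr)
          linarith [sq_nonneg μ]
        · exact hrow T r hr
    _ = (∑ r ∈ T, (y r + μ)) ^ 2 := by
        rw [← Finset.sum_mul, Finset.sum_add_distrib, Finset.sum_add_distrib, ← Finset.mul_sum,
          Finset.sum_const, Finset.sum_const, nsmul_eq_mul, nsmul_eq_mul]
        ring

end WeightedSums

section InnerProductSpace

variable [NormedAddCommGroup E] [InnerProductSpace ℝ E]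

theorem sum_weight_mul_sq_inner_le (T : Finset κ) {w : κ → ℝ} (hw : ∀ e ∈ T, 0 ≤ w e)
    {v : κ → E} {M : ℝ} (hM₀ : 0 ≤ M) (hM : ∀ e ∈ T, ∑ f ∈ T, w f * |⟪v e, v f⟫_ℝ| ≤ M) (x : E) :
    ∑ e ∈ T, w e * ⟪v e, x⟫_ℝ ^ 2 ≤ M * ‖x‖ ^ 2 := by
  set Q := ∑ e ∈ T, w e * ⟪v e, x⟫_ℝ ^ 2 with hQ
  set y := ∑ e ∈ T, (w e * ⟪v e, x⟫_ℝ) • v e with hy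
  have inner_y : ⟪y, x⟫_ℝ = Q := by
    simp [hy, hQ, sum_inner, real_inner_smul_left, sq, mul_assoc]
  have norm_y : ‖y‖ ^ 2 ≤ M * Q := by
    refine le_of_eq_of_le ?_ (sum_sum_weight_mul_le_of_row_sum_le T hw
      (fun e f ↦ real_inner_comm (v e) (v f)) hM (fun e ↦ ⟪v e, x⟫_ℝ))
    simp only [← real_inner_self_eq_norm_sq, hy, sum_inner, inner_sum, real_inner_smul_left,
      real_inner_smul_right]
    congr! 2 with e _ f _
    rw [real_inner_comm (v e) (v f)]
    ring
  have cauchy_schwarz : Q ^ 2 ≤ ‖y‖ ^ 2 * ‖x‖ ^ 2 := by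
    rw [← inner_y, ← mul_pow, ← sq_abs]
    gcongr
    exact abs_real_inner_le_norm y x
  have hQ₀ : 0 ≤ Q := Finset.sum_nonneg fun e he ↦ mul_nonneg (hw e he) (sq_nonneg _)
  rcases hQ₀.eq_or_lt with hQ_zero | hQ_pos
  · rw [← hQ_zero]
    positivity
  · refine le_of_mul_le_mul_left ?_ hQ_pos
    calc Q * Q = Q ^ 2 := (sq Q).symm
      _ ≤ ‖y‖ ^ 2 * ‖x‖ ^ 2 := cauchy_schwarz
      _ ≤ M * Q * ‖x‖ ^ 2 := by gcongr
      _ = Q * (M * ‖x‖ ^ 2) := by ring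

theorem sum_sq_inner_le_of_pairwise_inner_eq_zero {v : κ → E} (hv : ∀ s, ‖v s‖ ≤ 1)
    (horth : Pairwise fun r s ↦ ⟪v r, v s⟫_ℝ = 0) (T : Finset κ) (x : E) :
    ∑ s ∈ T, ⟪v s, x⟫_ℝ ^ 2 ≤ ‖x‖ ^ 2 := by
  have row_sum (r : κ) (hr : r ∈ T) : ∑ s ∈ T, 1 * |⟪v r, v s⟫_ℝ| ≤ 1 := by
    rw [Finset.sum_eq_single_of_mem r hr fun s _ hs ↦ by simp [horth hs.symm]]
    simpa using hv r
  simpa using sum_weight_mul_sq_inner_le T (w := 1) (by simp) zero_le_one row_sum x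

end InnerProductSpace

section Rotation

variable [Fintype ι]

/-- The family `v` multiplied by the matrix `U`, whose columns list the new coefficients. For
orthogonal `U` this is the rotation of `v` under which the DDVV inequality is invariant. -/
def rotate [AddCommMonoid F] [Module ℝ F] (U : Matrix ι ι ℝ) (v : ι → F) (i : ι) : F :=
  ∑ k, U k i • v k

theorem sum_norm_sq_rotate [DecidableEq ι] [NormedAddCommGroup E] [InnerProductSpace ℝ E]
    (U : orthogonalGroup ι ℝ) (v : ι → E) :
    ∑ i, ‖rotate U.1 v i‖ ^ 2 = ∑ i, ‖v i‖ ^ 2 := by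
  have hU (k l : ι) : ∑ i, U.1 k i * U.1 l i = (1 : Matrix ι ι ℝ) k l := by
    have h : U.1 * star U.1 = 1 := Unitary.mul_star_self_of_mem U.2
    simpa [Matrix.mul_apply] using congr_fun₂ h k l
  calc ∑ i, ‖rotate U.1 v i‖ ^ 2
    _ = ∑ i, ∑ k, ∑ l, U.1 k i * U.1 l i * ⟪v k, v l⟫_ℝ := by
        simp only [← real_inner_self_eq_norm_sq, rotate, sum_inner, inner_sum,
          real_inner_smul_left, real_inner_smul_right]
        congr! 3 with i _ k _ l _
        rw [real_inner_comm (v l) (v k)]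
        ring
    _ = ∑ k, ∑ l, (∑ i, U.1 k i * U.1 l i) * ⟪v k, v l⟫_ℝ := by
        simp only [Finset.sum_mul]
        rw [Finset.sum_comm]
        exact Finset.sum_congr rfl fun k _ ↦ Finset.sum_comm
    _ = ∑ i, ‖v i‖ ^ 2 := by
        simp [hU, Matrix.one_apply]

theorem exists_pairwise_inner_rotate_eq_zero [DecidableEq ι] [NormedAddCommGroup E]
    [InnerProductSpace ℝ E] (v : ι → E) :
    ∃ U : orthogonalGroup ι ℝ,
      Pairwise fun i j ↦ ⟪rotate U.1 v i, rotate U.1 v j⟫_ℝ = 0 := by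
  have hG : (gram ℝ v).IsHermitian := isHermitian_gram ℝ v
  refine ⟨hG.eigenvectorUnitary, fun i j hij ↦ ?_⟩
  have diag := congr_fun₂ hG.conjStarAlgAut_star_eigenvectorUnitary i j
  rw [diagonal_apply_ne _ hij, Unitary.conjStarAlgAut_star_apply, Matrix.mul_assoc] at diag
  rw [← diag]
  exact (star_dotProduct_gram_mulVec v _ _).symm

theorem isSymm_rotate {U : Matrix ι ι ℝ} {A : ι → Matrix n n ℝ} (hA : ∀ i, (A i).IsSymm)
    (i : ι) : (rotate U A i).IsSymm := by
  simp only [rotate, IsSymm, transpose_sum, transpose_smul, (hA _).eq]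

end Rotation

section Frobenius

variable [Fintype m] [Fintype n]

theorem frobenius_norm_sq_eq_sum (A : Matrix m n ℝ) : ‖A‖ ^ 2 = ∑ i, ∑ j, A i j ^ 2 := by
  rw [Matrix.frobenius_norm_def, ← Real.sqrt_eq_rpow, Real.sq_sqrt (by positivity)]
  simp

/-- The trace inner product, which induces the Frobenius norm. -/
noncomputable local instance frobeniusInnerProductSpace : InnerProductSpace ℝ (Matrix m n ℝ) where
  inner A B := (A * Bᵀ).trace
  norm_sq_eq_re_inner A := by
    simp [frobenius_norm_sq_eq_sum, Matrix.trace, Matrix.mul_apply, ← sq]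
  conj_inner_symm A B := by simp [← Matrix.trace_transpose (A * Bᵀ)]
  add_left A B C := by simp [Matrix.add_mul]
  smul_left A B r := by simp

theorem frobenius_inner_eq_trace (A B : Matrix m n ℝ) : ⟪A, B⟫_ℝ = (A * Bᵀ).trace := rfl

theorem inner_single_one_right [DecidableEq m] [DecidableEq n] (A : Matrix m n ℝ) (i : m) (j : n) :
    ⟪A, single i j (1 : ℝ)⟫_ℝ = A i j := by
  simp [frobenius_inner_eq_trace, trace_mul_single]

theorem sum_sq_apply_le_half {B : κ → Matrix n n ℝ} (hsymm : ∀ s, (B s).IsSymm)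
    (hB : ∀ s, ‖B s‖ ≤ 1) (horth : Pairwise fun r s ↦ ⟪B r, B s⟫_ℝ = 0) (T : Finset κ) {i j : n}
    (hij : i ≠ j) : ∑ s ∈ T, B s i j ^ 2 ≤ 1 / 2 := by
  classical
  set S : Matrix n n ℝ := single i j 1 + single j i 1 with hS
  have hS_norm : ‖S‖ ^ 2 = 2 := by
    calc ‖S‖ ^ 2
      _ = ⟪S, S⟫_ℝ := (real_inner_self_eq_norm_sq S).symm
      _ = S i j + S j i := by
          nth_rw 2 [hS]
          rw [inner_add_right, inner_single_one_right, inner_single_one_right]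
      _ = 2 := by simp [hS, hij, hij.symm, one_add_one_eq_two]
  have hS_inner (s : κ) : ⟪B s, S⟫_ℝ = 2 * B s i j := by
    rw [hS, inner_add_right, inner_single_one_right, inner_single_one_right, (hsymm s).apply,
      two_mul]
  have bessel := sum_sq_inner_le_of_pairwise_inner_eq_zero hB horth T S
  simp only [hS_inner, hS_norm, mul_pow, ← Finset.mul_sum] at bessel
  linarith

theorem norm_lie_self (A : Matrix n n ℝ) : ‖⁅A, A⁆‖ = 0 := by
  simp only [Ring.lie_def, sub_self, norm_zero]

theorem norm_lie_comm (A B : Matrix n n ℝ) : ‖⁅B, A⁆‖ = ‖⁅A, B⁆‖ :=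
  norm_sub_rev _ _

theorem abs_inner_single_sub_single_le [DecidableEq n] {i j : n} (hij : i ≠ j) (f : n × n) :
    |⟪EuclideanSpace.single i (1 : ℝ) - EuclideanSpace.single j 1,
        EuclideanSpace.single f.1 (1 : ℝ) - EuclideanSpace.single f.2 1⟫_ℝ| ≤
      1 + (if f = (i, j) then 1 else 0) + (if f = (j, i) then 1 else 0) := by
  obtain ⟨k, l⟩ := f
  simp only [inner_sub_left, inner_sub_right, EuclideanSpace.inner_single_left, map_one, one_mul,
    PiLp.single_apply, Prod.mk.injEq]
  grind

theorem sum_weight_mul_sq_sub_le {w : n → n → ℝ} (hw₀ : ∀ i j, 0 ≤ w i j)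
    (hw : ∀ i j, i ≠ j → w i j ≤ 1 / 2) (x : n → ℝ) :
    ∑ i, ∑ j, w i j * (x i - x j) ^ 2 ≤ (∑ i, ∑ j, w i j + 1) * ∑ i, x i ^ 2 := by
  classical
  set W := ∑ i, ∑ j, w i j
  have hW_pair : ∑ f : n × n, w f.1 f.2 = W := Fintype.sum_prod_type _
  have hW₀ : 0 ≤ W := Finset.sum_nonneg fun i _ ↦ Finset.sum_nonneg fun j _ ↦ hw₀ i j
  let b (e : n × n) : EuclideanSpace ℝ n :=
    EuclideanSpace.single e.1 1 - EuclideanSpace.single e.2 1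
  have row_sum (e : n × n) : ∑ f, w f.1 f.2 * |⟪b e, b f⟫_ℝ| ≤ W + 1 := by
    obtain ⟨i, j⟩ := e
    rcases eq_or_ne i j with rfl | hij
    · simpa [b] using hW₀.trans (le_add_of_nonneg_right zero_le_one)
    calc ∑ f, w f.1 f.2 * |⟪b (i, j), b f⟫_ℝ|
      _ ≤ ∑ f : n × n, w f.1 f.2 *
            (1 + (if f = (i, j) then 1 else 0) + (if f = (j, i) then 1 else 0)) := by
          gcongr with f
          · exact hw₀ _ _
          · exact abs_inner_single_sub_single_le hij f
      _ = W + w i j + w j i := by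
          simp [mul_add, Finset.sum_add_distrib, hW_pair]
      _ ≤ W + 1 := by linarith [hw i j hij, hw j i hij.symm]
  have selberg := sum_weight_mul_sq_inner_le Finset.univ (fun e _ ↦ hw₀ e.1 e.2)
    (by positivity) (fun e _ ↦ row_sum e) (WithLp.toLp 2 x)
  simpa [b, inner_sub_left, EuclideanSpace.inner_single_left, EuclideanSpace.real_norm_sq_eq,
    Fintype.sum_prod_type] using selberg

theorem norm_sq_lie_diagonal [DecidableEq n] (d : n → ℝ) (B : Matrix n n ℝ) :
    ‖⁅diagonal d, B⁆‖ ^ 2 = ∑ i, ∑ j, B i j ^ 2 * (d i - d j) ^ 2 := by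
  simp only [frobenius_norm_sq_eq_sum, Ring.lie_def, Matrix.sub_apply, diagonal_mul, mul_diagonal]
  congr! 2
  ring

theorem sum_norm_sq_lie_diagonal_le [DecidableEq n] (d : n → ℝ) {B : κ → Matrix n n ℝ}
    (hsymm : ∀ s, (B s).IsSymm) (hB : ∀ s, ‖B s‖ ≤ 1)
    (horth : Pairwise fun r s ↦ ⟪B r, B s⟫_ℝ = 0) (T : Finset κ) :
    ∑ s ∈ T, ‖⁅diagonal d, B s⁆‖ ^ 2 ≤ (T.card + 1) * ‖diagonal d‖ ^ 2 := by
  have total : ∑ i, ∑ j, ∑ s ∈ T, B s i j ^ 2 ≤ T.card := by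
    calc ∑ i, ∑ j, ∑ s ∈ T, B s i j ^ 2
      _ = ∑ s ∈ T, ‖B s‖ ^ 2 := by
          simp only [frobenius_norm_sq_eq_sum]
          rw [Finset.sum_comm (s := T)]
          exact Finset.sum_congr rfl fun i _ ↦ Finset.sum_comm
      _ ≤ ∑ s ∈ T, 1 := by
          gcongr with s
          exact pow_le_one₀ (norm_nonneg _) (hB s)
      _ = T.card := by simp
  calc ∑ s ∈ T, ‖⁅diagonal d, B s⁆‖ ^ 2
    _ = ∑ i, ∑ j, (∑ s ∈ T, B s i j ^ 2) * (d i - d j) ^ 2 := by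
        simp only [norm_sq_lie_diagonal, Finset.sum_mul]
        rw [Finset.sum_comm]
        exact Finset.sum_congr rfl fun i _ ↦ Finset.sum_comm
    _ ≤ (∑ i, ∑ j, ∑ s ∈ T, B s i j ^ 2 + 1) * ∑ i, d i ^ 2 :=
        sum_weight_mul_sq_sub_le (fun i j ↦ Finset.sum_nonneg fun s _ ↦ sq_nonneg _)
          (fun i j hij ↦ sum_sq_apply_le_half hsymm hB horth T hij) d
    _ ≤ (T.card + 1) * ‖diagonal d‖ ^ 2 := by
        rw [frobenius_norm_diagonal, EuclideanSpace.real_norm_sq_eq]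
        gcongr

theorem inner_conjStarAlgAut [DecidableEq n] (U : orthogonalGroup n ℝ) (A B : Matrix n n ℝ) :
    ⟪Unitary.conjStarAlgAut ℝ _ U A, Unitary.conjStarAlgAut ℝ _ U B⟫_ℝ = ⟪A, B⟫_ℝ := by
  simp only [frobenius_inner_eq_trace, ← conjTranspose_eq_transpose_of_trivial,
    ← star_eq_conjTranspose, ← map_star, ← map_mul]
  rw [Unitary.conjStarAlgAut_apply, trace_mul_comm, ← mul_assoc, Unitary.coe_star_mul_self, one_mul]

theorem norm_conjStarAlgAut [DecidableEq n] (U : orthogonalGroup n ℝ) (A : Matrix n n ℝ) :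
    ‖Unitary.conjStarAlgAut ℝ _ U A‖ = ‖A‖ := by
  rw [norm_eq_sqrt_real_inner, inner_conjStarAlgAut, ← norm_eq_sqrt_real_inner]

theorem sum_norm_sq_lie_le {A : Matrix n n ℝ} (hA : A.IsSymm) {B : κ → Matrix n n ℝ}
    (hsymm : ∀ s, (B s).IsSymm) (hB : ∀ s, ‖B s‖ ≤ 1)
    (horth : Pairwise fun r s ↦ ⟪B r, B s⟫_ℝ = 0) (T : Finset κ) :
    ∑ s ∈ T, ‖⁅A, B s⁆‖ ^ 2 ≤ (T.card + 1) * ‖A‖ ^ 2 := by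
  classical
  have hA' : A.IsHermitian := isHermitian_iff_isSymm.mpr hA
  set φ := Unitary.conjStarAlgAut ℝ (Matrix n n ℝ) (star hA'.eigenvectorUnitary)
  have φ_norm (X : Matrix n n ℝ) : ‖φ X‖ = ‖X‖ := norm_conjStarAlgAut _ X
  have φ_lie (X Y : Matrix n n ℝ) : φ ⁅X, Y⁆ = ⁅φ X, φ Y⁆ := by
    simp only [Ring.lie_def, map_sub, map_mul]
  have φ_symm (s : κ) : (φ (B s)).IsSymm := by
    rw [← isHermitian_iff_isSymm]
    exact (isHermitian_iff_isSymm.mpr (hsymm s)).isSelfAdjoint.map φ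
  have diag := sum_norm_sq_lie_diagonal_le hA'.eigenvalues φ_symm
    (fun s ↦ (φ_norm (B s)).trans_le (hB s))
    (fun r s hrs ↦ (inner_conjStarAlgAut _ (B r) (B s)).trans (horth hrs)) T
  have φ_A : φ A = diagonal hA'.eigenvalues := hA'.conjStarAlgAut_star_eigenvectorUnitary
  simpa only [← φ_A, ← φ_lie, φ_norm] using diag

theorem sum_norm_sq_lie_le_card {B : κ → Matrix n n ℝ} (hsymm : ∀ s, (B s).IsSymm)
    (hB : ∀ s, ‖B s‖ ≤ 1) (horth : Pairwise fun r s ↦ ⟪B r, B s⟫_ℝ = 0) {T : Finset κ} {r : κ}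
    (hr : r ∈ T) : ∑ s ∈ T, ‖⁅B r, B s⁆‖ ^ 2 ≤ T.card := by
  classical
  calc ∑ s ∈ T, ‖⁅B r, B s⁆‖ ^ 2
    _ = ∑ s ∈ T.erase r, ‖⁅B r, B s⁆‖ ^ 2 := by
        rw [← Finset.add_sum_erase T _ hr, norm_lie_self, zero_pow two_ne_zero, zero_add]
    _ ≤ ((T.erase r).card + 1) * ‖B r‖ ^ 2 := sum_norm_sq_lie_le (hsymm r) hsymm hB horth _
    _ = T.card * ‖B r‖ ^ 2 := by
        rw [← Finset.card_erase_add_one hr, Nat.cast_add_one]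
    _ ≤ T.card :=
        mul_le_of_le_one_right (Nat.cast_nonneg _) (pow_le_one₀ (norm_nonneg _) (hB r))

theorem norm_lie_eq_mul_norm_lie_normalize (A B : Matrix n n ℝ) :
    ‖⁅A, B⁆‖ = ‖A‖ * ‖B‖ * ‖⁅NormedSpace.normalize A, NormedSpace.normalize B⁆‖ := by
  have lie_eq : ⁅A, B⁆ =
      (‖A‖ * ‖B‖) • ⁅NormedSpace.normalize A, NormedSpace.normalize B⁆ := by
    conv_lhs => rw [← NormedSpace.norm_smul_normalize A, ← NormedSpace.norm_smul_normalize B]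
    simp only [Ring.lie_def, smul_sub, smul_mul_smul_comm, mul_comm ‖B‖]
  rw [lie_eq, norm_smul, norm_mul, norm_norm, norm_norm]

theorem sum_sum_norm_sq_lie_le_of_pairwise_inner_eq_zero [Fintype ι] {A : ι → Matrix n n ℝ}
    (hA : ∀ r, (A r).IsSymm) (horth : Pairwise fun r s ↦ ⟪A r, A s⟫_ℝ = 0) :
    ∑ r, ∑ s, ‖⁅A r, A s⁆‖ ^ 2 ≤ (∑ r, ‖A r‖ ^ 2) ^ 2 := by
  let V (r : ι) : Matrix n n ℝ := NormedSpace.normalize (A r)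
  have V_symm (r : ι) : (V r).IsSymm := (hA r).smul _
  have V_norm (r : ι) : ‖V r‖ ≤ 1 := by
    rcases eq_or_ne (A r) 0 with hr | hr
    · simp [V, hr]
    · exact (NormedSpace.norm_normalize_eq_one_iff.mpr hr).le
  have V_orth : Pairwise fun r s ↦ ⟪V r, V s⟫_ℝ = 0 := fun r s hrs ↦ by
    simp only [V, NormedSpace.normalize, real_inner_smul_left, real_inner_smul_right, horth hrs,
      mul_zero]
  calc ∑ r, ∑ s, ‖⁅A r, A s⁆‖ ^ 2
    _ = ∑ r, ∑ s, ‖A r‖ ^ 2 * ‖A s‖ ^ 2 * ‖⁅V r, V s⁆‖ ^ 2 := by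
        simp only [V, norm_lie_eq_mul_norm_lie_normalize (A _), mul_pow]
    _ ≤ (∑ r, ‖A r‖ ^ 2) ^ 2 :=
        sum_sum_mul_mul_le_sq_sum (fun r s ↦ by rw [norm_lie_comm])
          (fun _ _ hr ↦ sum_norm_sq_lie_le_card V_symm V_norm V_orth hr) Finset.univ
          fun _ _ ↦ sq_nonneg _

theorem sum_sum_norm_sq_lie_rotate [Fintype ι] [DecidableEq ι] (U : orthogonalGroup ι ℝ)
    (A : ι → Matrix n n ℝ) :
    ∑ r, ∑ s, ‖⁅rotate U.1 A r, rotate U.1 A s⁆‖ ^ 2 = ∑ r, ∑ s, ‖⁅A r, A s⁆‖ ^ 2 := by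
  have lie_rotate_left (X : Matrix n n ℝ) (r : ι) :
      ⁅rotate U.1 A r, X⁆ = rotate U.1 (fun k ↦ ⁅A k, X⁆) r := by
    simp [rotate, Ring.lie_def, Finset.sum_mul, Finset.mul_sum, smul_sub]
  have lie_rotate_right (X : Matrix n n ℝ) (s : ι) :
      ⁅X, rotate U.1 A s⁆ = rotate U.1 (fun k ↦ ⁅X, A k⁆) s := by
    simp [rotate, Ring.lie_def, Finset.sum_mul, Finset.mul_sum, smul_sub]
  calc ∑ r, ∑ s, ‖⁅rotate U.1 A r, rotate U.1 A s⁆‖ ^ 2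
    _ = ∑ r, ∑ s, ‖⁅rotate U.1 A r, A s⁆‖ ^ 2 := by
        simp only [lie_rotate_right, sum_norm_sq_rotate]
    _ = ∑ s, ∑ r, ‖⁅rotate U.1 A r, A s⁆‖ ^ 2 := Finset.sum_comm
    _ = ∑ s, ∑ r, ‖⁅A r, A s⁆‖ ^ 2 := by simp only [lie_rotate_left, sum_norm_sq_rotate]
    _ = ∑ r, ∑ s, ‖⁅A r, A s⁆‖ ^ 2 := Finset.sum_comm

theorem ddvv_traceless_n_3_general [Fintype ι] (A : ι → Matrix n n ℝ) (hA : ∀ r, (A r).IsSymm) :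
    ∑ r, ∑ s, ‖⁅A r, A s⁆‖ ^ 2 ≤ (∑ r, ‖A r‖ ^ 2) ^ 2 := by
  classical
  obtain ⟨U, horth⟩ := exists_pairwise_inner_rotate_eq_zero A
  rw [← sum_sum_norm_sq_lie_rotate U A, ← sum_norm_sq_rotate U A]
  exact sum_sum_norm_sq_lie_le_of_pairwise_inner_eq_zero (fun r ↦ isSymm_rotate hA r) horth

theorem two_mul_norm_sq_lie_add_le {A B C : Matrix n n ℝ} (hA : A.IsSymm) (hB : B.IsSymm)
    (hC : C.IsSymm) :
    2 * ‖⁅A, B⁆‖ ^ 2 + 2 * ‖⁅B, C⁆‖ ^ 2 + 2 * ‖⁅C, A⁆‖ ^ 2 ≤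
      (‖A‖ ^ 2 + ‖B‖ ^ 2 + ‖C‖ ^ 2) ^ 2 := by
  have hABC : ∀ r, (![A, B, C] r).IsSymm := by simp [Fin.forall_fin_succ, hA, hB, hC]
  have ddvv := ddvv_traceless_n_3_general ![A, B, C] hABC
  simp only [Fin.sum_univ_three, cons_val, norm_lie_self] at ddvv
  rw [norm_lie_comm A B, norm_lie_comm B C, norm_lie_comm C A] at ddvv
  linarith

theorem frobSq_eq_norm_sq {k : ℕ} (A : Matrix (Fin k) (Fin k) ℝ) : frobSq A = ‖A‖ ^ 2 :=
  (frobenius_norm_sq_eq_sum A).symm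

end Frobenius

end DDVV

/-- For real symmetric traceless `n × n` matrices `A, B, C`,
`(‖A‖² + ‖B‖² + ‖C‖²)² ≥ 2‖[A,B]‖² + 2‖[B,C]‖² + 2‖[C,A]‖²`. -/
theorem ddvv_traceless_n_3 (n : ℕ) (A B C : Matrix (Fin n) (Fin n) ℝ)
    (hA : A.IsSymm) (hB : B.IsSymm) (hC : C.IsSymm)
    (hA0 : A.trace = 0) (hB0 : B.trace = 0) (hC0 : C.trace = 0) :
    (frobSq A + frobSq B + frobSq C) ^ 2 ≥
      2 * frobSq (mcomm A B) + 2 * frobSq (mcomm B C) + 2 * frobSq (mcomm C A) := by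
  simpa only [frobSq_eq_norm_sq, mcomm, Ring.lie_def] using two_mul_norm_sq_lie_add_le hA hB hC
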